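/- Let E be the side-information digraph on Fin 4 (clients 1,…,4, each wanting its own message) determined by the has-sets H₁ = {4}, H₂ = {1, 3}, H₃ = {1, 2}, H₄ = {2, 3} (i.e., E i j holds exactly for the pairs 1→4; 2→1, 2→3; 3→1, 3→2; 4→2, 4→3). Then the minimal index code length satisfies ℓ*(E) = 2, achieved by the linear index code transmitting x₁ + x₂ + x₃ and x₁ + x₄. -/

import Mathlib

/-- A matrix `A` over `ZMod 2` fits the side-information digraph `E` if it has ones on the
diagonal and zeros at all off-diagonal non-edge positions. -/
def Fits {n : ℕ} (E : Fin n → Fin n → Prop) (A : Matrix (Fin n) (Fin n) (ZMod 2)) : Prop :=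
  (∀ i, A i i = 1) ∧ ∀ i j, i ≠ j → ¬E i j → A i j = 0

/-- `minrk₂` of a side-information digraph: the minimum `ZMod 2` rank over matrices fitting it. -/
noncomputable def minrk2 {n : ℕ} (E : Fin n → Fin n → Prop) : ℕ :=
  sInf {r : ℕ | ∃ A : Matrix (Fin n) (Fin n) (ZMod 2), Fits E A ∧ A.rank = r}

/-- `Enc` is (the encoding map of) an index code of length `ℓ` for the side-information
digraph `E`: every client `i` can decode `x i` from the encoded word and the restriction of
`x` to its side information `{j | E i j}`. -/
def IsIndexCode {n ℓ : ℕ} (E : Fin n → Fin n → Prop)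
    (Enc : (Fin n → ZMod 2) → (Fin ℓ → ZMod 2)) : Prop :=
  ∃ Dec : (i : Fin n) → (Fin ℓ → ZMod 2) → ({j : Fin n // E i j} → ZMod 2) → ZMod 2,
    ∀ (x : Fin n → ZMod 2) (i : Fin n), Dec i (Enc x) (fun j => x j.1) = x i

/-- There is an index code of length `ℓ` for `E`. -/
def HasIndexCode {n : ℕ} (E : Fin n → Fin n → Prop) (ℓ : ℕ) : Prop :=
  ∃ Enc : (Fin n → ZMod 2) → (Fin ℓ → ZMod 2), IsIndexCode E Enc

/-- There is a linear index code of length `ℓ` for `E`. -/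
def HasLinearIndexCode {n : ℕ} (E : Fin n → Fin n → Prop) (ℓ : ℕ) : Prop :=
  ∃ Enc : (Fin n → ZMod 2) → (Fin ℓ → ZMod 2),
    IsLinearMap (ZMod 2) Enc ∧ IsIndexCode E Enc

/-- The minimal index code length `ℓ*(E)`. -/
noncomputable def minIndexCodeLength {n : ℕ} (E : Fin n → Fin n → Prop) : ℕ :=
  sInf {ℓ : ℕ | HasIndexCode E ℓ}

/-- A directed cycle of `E`: a list of at least two distinct vertices with an edge from each
vertex to the cyclically next one. -/
def IsDirCycle {n : ℕ} (E : Fin n → Fin n → Prop) (c : List (Fin n)) : Prop :=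
  2 ≤ c.length ∧ c.Nodup ∧
    ∀ t : Fin c.length,
      E (c.get t) (c.get ⟨(t.1 + 1) % c.length, Nat.mod_lt _ t.pos⟩)

/-- The side-information digraph on 4 clients (0-indexed) given by the has-sets
`H₀ = {3}`, `H₁ = {0, 2}`, `H₂ = {0, 1}`, `H₃ = {1, 2}`. -/
def exampleDigraph4 : Fin 4 → Fin 4 → Prop := fun i j =>
  (i = 0 ∧ j = 3) ∨
  (i = 1 ∧ (j = 0 ∨ j = 2)) ∨
  (i = 2 ∧ (j = 0 ∨ j = 1)) ∨
  (i = 3 ∧ (j = 1 ∨ j = 2))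

/-!
If `S` induces an acyclic subdigraph of the side information (for finite `S`: `Function.swap E` is
well-founded on `S`), then the coordinates outside `S` together with the encoded word determine
the message: visit the clients of `S` so that each one comes after all clients of `S` whose
messages it knows, and let them decode in turn. Counting the messages vanishing outside `S` shows
that an index code has length at least `|S|`. In the example `{0, 1}` is acyclic, and conversely
the two transmitted sums suffice: client `0` reads off the second one, clients `1` and `2` the
first one, and client `3` their difference `x₁ + x₂ - x₃`.
-/

variable {n ℓ : ℕ} {E : Fin n → Fin n → Prop}

theorem isIndexCode_iff {Enc : (Fin n → ZMod 2) → (Fin ℓ → ZMod 2)} :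
    IsIndexCode E Enc ↔
      ∀ x y i, Enc x = Enc y → (∀ j, E i j → x j = y j) → x i = y i := by
  constructor
  · rintro ⟨Dec, hDec⟩ x y i hEnc hside
    have hrestrict : (fun j : {j // E i j} => x j.1) = fun j => y j.1 :=
      funext fun j => hside j.1 j.2
    rw [← hDec x i, ← hDec y i, hEnc, hrestrict]
  · intro h
    have hfactors (i : Fin n) : Function.FactorsThrough (fun x : Fin n → ZMod 2 => x i)
        (fun x => (Enc x, fun j : {j // E i j} => x j.1)) := fun x y hxy =>
      h x y i (congrArg Prod.fst hxy) fun j hj => congrFun (congrArg Prod.snd hxy) ⟨j, hj⟩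
    choose Dec hDec using fun i => (Function.factorsThrough_iff _).1 (hfactors i)
    exact ⟨fun i w s => Dec i (w, s), fun x i => (congrFun (hDec i) x).symm⟩

namespace IsIndexCode

variable {Enc : (Fin n → ZMod 2) → (Fin ℓ → ZMod 2)}

theorem minIndexCodeLength_le (h : IsIndexCode E Enc) : minIndexCodeLength E ≤ ℓ :=
  Nat.sInf_le ⟨Enc, h⟩

theorem eq_of_eqOn_compl (h : IsIndexCode E Enc) {S : Set (Fin n)}
    (hS : S.WellFoundedOn (Function.swap E)) {x y : Fin n → ZMod 2}
    (hEnc : Enc x = Enc y) (hxy : Set.EqOn x y Sᶜ) : x = y := by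
  funext i
  by_cases hi : i ∈ S
  · refine hS.induction hi fun i _ ih => isIndexCode_iff.1 h x y i hEnc fun j hij => ?_
    by_cases hj : j ∈ S
    · exact ih j hj hij
    · exact hxy hj
  · exact hxy hi

theorem card_le_length (h : IsIndexCode E Enc) {S : Finset (Fin n)}
    (hS : (S : Set (Fin n)).WellFoundedOn (Function.swap E)) : S.card ≤ ℓ := by
  let extendByZero (f : S → ZMod 2) : Fin n → ZMod 2 := Function.extend Subtype.val f 0
  have hzero (f : S → ZMod 2) {i : Fin n} (hi : i ∉ S) : extendByZero f i = 0 :=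
    Function.extend_apply' _ _ _ (by simpa using hi)
  have hinj : Function.Injective (Enc ∘ extendByZero) := fun f g hfg =>
    Function.extend_injective Subtype.val_injective (0 : Fin n → ZMod 2) <|
      h.eq_of_eqOn_compl hS hfg fun i hi => (hzero f hi).trans (hzero g hi).symm
  have hcard : 2 ^ S.card ≤ 2 ^ ℓ := by
    simpa using Fintype.card_le_of_injective _ hinj
  exact (Nat.pow_le_pow_iff_right one_lt_two).1 hcard

end IsIndexCode

theorem isIndexCode_id : IsIndexCode E (id : (Fin n → ZMod 2) → Fin n → ZMod 2) :=
  isIndexCode_iff.2 fun _ _ i hxy _ => congrFun hxy i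

theorem card_le_minIndexCodeLength {S : Finset (Fin n)}
    (hS : (S : Set (Fin n)).WellFoundedOn (Function.swap E)) :
    S.card ≤ minIndexCodeLength E :=
  le_csInf ⟨n, id, isIndexCode_id⟩ fun _ ⟨_, hEnc⟩ => hEnc.card_le_length hS

theorem wellFoundedOn_zero_one_swap_exampleDigraph4 :
    (({0, 1} : Finset (Fin 4)) : Set (Fin 4)).WellFoundedOn
      (Function.swap exampleDigraph4) := by
  have hdecr : ∀ j ∈ ({0, 1} : Finset (Fin 4)), ∀ i ∈ ({0, 1} : Finset (Fin 4)),
      Function.swap exampleDigraph4 j i → j < i := by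
    simp [exampleDigraph4, Function.swap]
  exact wellFounded_lt.wellFoundedOn.mono' hdecr

theorem isLinearMap_example4Code {R : Type*} [Semiring R] :
    IsLinearMap R (fun x : Fin 4 → R => ![x 0 + x 1 + x 2, x 0 + x 3]) where
  map_add x y := by simp [add_add_add_comm]
  map_smul c x := by simp [mul_add]

theorem isIndexCode_example4Code :
    IsIndexCode exampleDigraph4
      (fun x : Fin 4 → ZMod 2 => ![x 0 + x 1 + x 2, x 0 + x 3]) := by
  refine isIndexCode_iff.2 fun x y i hEnc hside => ?_
  have hfst : x 0 + x 1 + x 2 = y 0 + y 1 + y 2 := congrFun hEnc 0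
  have hsnd : x 0 + x 3 = y 0 + y 3 := congrFun hEnc 1
  match i with
  | 0 => linear_combination hsnd - hside 3 (by simp [exampleDigraph4])
  | 1 =>
    linear_combination hfst - hside 0 (by simp [exampleDigraph4])
      - hside 2 (by simp [exampleDigraph4])
  | 2 =>
    linear_combination hfst - hside 0 (by simp [exampleDigraph4])
      - hside 1 (by simp [exampleDigraph4])
  | 3 =>
    linear_combination hsnd - hfst + hside 1 (by simp [exampleDigraph4])
      + hside 2 (by simp [exampleDigraph4])

/-- For the 4-client example, the minimal index code length is 2, achieved by the linear
index code transmitting `x₀ + x₁ + x₂` and `x₀ + x₃`. -/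
theorem example4_minIndexCodeLength_eq_two :
    minIndexCodeLength exampleDigraph4 = 2 ∧
    IsLinearMap (ZMod 2)
      (fun x : Fin 4 → ZMod 2 => ![x 0 + x 1 + x 2, x 0 + x 3]) ∧
    IsIndexCode exampleDigraph4
      (fun x : Fin 4 → ZMod 2 => ![x 0 + x 1 + x 2, x 0 + x 3]) := by
  refine ⟨le_antisymm isIndexCode_example4Code.minIndexCodeLength_le ?_,
    isLinearMap_example4Code, isIndexCode_example4Code⟩
  exact card_le_minIndexCodeLength wellFoundedOn_zero_one_swap_exampleDigraph4
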